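/- Let h ∈ ℝ. (i) If a linear operator D′ on ℂ[z] satisfies D′∘l₋₁ − l₋₁∘D′ = id, D′∘l₀ − l₀∘D′ = D′, and D′∘l₁ − l₁∘D′ = D′∘D′, then D′ = d/dz. (ii) If 2h is not a nonpositive integer and a linear operator F′ on ℂ[z] satisfies l₁∘F′ − F′∘l₁ = id, l₀∘F′ − F′∘l₀ = F′, and l₋₁∘F′ − F′∘l₋₁ = F′∘F′, then F′ = F. In particular the operators D and F of Proposition 1 are uniquely determined by these commutation relations. -/

import Mathlib

open Polynomial

/-- Multiplication by `z` on `ℂ[z]`: the generator `l₋₁`. -/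
noncomputable def lNeg : Module.End ℂ (Polynomial ℂ) :=
  LinearMap.mulLeft ℂ (Polynomial.X : Polynomial ℂ)

/-- The differentiation operator `D = d/dz` on `ℂ[z]`. -/
noncomputable def Dop : Module.End ℂ (Polynomial ℂ) :=
  Polynomial.derivative

/-- The generator `l₀ = z·d/dz + h·id`. -/
noncomputable def lZero (h : ℝ) : Module.End ℂ (Polynomial ℂ) :=
  lNeg * Dop + (h : ℂ) • 1

/-- The generator `l₁ = z·d²/dz² + 2h·d/dz`. -/
noncomputable def lOne (h : ℝ) : Module.End ℂ (Polynomial ℂ) :=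
  lNeg * Dop * Dop + ((2 * h : ℝ) : ℂ) • Dop

/-!
Subtracting two solutions of a system of linear commutation relations gives an operator that
commutes with multiplication by `X`, or with `d/dX`, and still shifts degrees; such an operator
vanishes. For `D'` this is the whole argument. For `F'`, let `E = X · d/dX` be the Euler operator.
Since `l₁ = (E + 2h) · d/dX`, the operator `G = F' (E + 2h)` satisfies `[d/dX, G] = [l₁, F'] = 1`,
so the same principle gives `G = X`, which reads `(n + 2h) F'(Xⁿ) = Xⁿ⁺¹` on monomials.
-/

section Polynomial

theorem linearMap_ext_X_pow {R M : Type*} [Semiring R] [AddCommMonoid M] [Module R M]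
    {A B : R[X] →ₗ[R] M} (hAB : ∀ n : ℕ, A (X ^ n) = B (X ^ n)) : A = B :=
  lhom_ext' fun n => LinearMap.ext_ring <| by
    simpa only [LinearMap.comp_apply, monomial_one_right_eq_X_pow] using hAB n

theorem eq_zero_of_derivative_X_mul_eq_zero {R : Type*} [Semiring R] [IsAddTorsionFree R]
    {p : R[X]} (hp : derivative (X * p) = 0) : p = 0 := by
  by_contra hne
  have hdeg : (X * p).natDegree = 0 := derivative_eq_zero.mp hp
  have : Nontrivial R := Nontrivial.of_polynomial_ne hne
  rw [natDegree_X_mul hne] at hdeg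
  exact Nat.succ_ne_zero _ hdeg

theorem isUnit_of_smul_eq_X_pow {R : Type*} [CommSemiring R] {a : R} {p : R[X]} {n : ℕ}
    (hp : a • p = X ^ n) : IsUnit a :=
  .of_mul_eq_one (p.coeff n) <| by
    rw [← smul_eq_mul, ← coeff_smul, hp, coeff_X_pow_self]

end Polynomial

section Commutator

variable {A : Type*} [Ring A]

theorem mul_mul_eq_of_commutator_eq {d n f : A}
    (hd : d * n - n * d = d) (hf : n * f - f * n = f) : d * (f * n) = n * d * f := by
  calc
    d * (f * n) = d * (n * f - f) := by rw [eq_sub_of_add_eq' (sub_eq_iff_eq_add.mp hf).symm]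
    _ = (d * n - d) * f := by rw [mul_sub, sub_mul, mul_assoc]
    _ = n * d * f := by rw [sub_eq_iff_eq_add'.mpr (sub_eq_iff_eq_add.mp hd)]

variable {R : Type*} [CommSemiring R] [Algebra R A]

theorem add_smul_one_mul_sub (a : R) (x y : A) :
    (x + a • 1) * y - y * (x + a • 1) = x * y - y * x := by
  rw [add_mul, mul_add, smul_one_mul, mul_smul_one, add_sub_add_right_eq_sub]

theorem mul_add_smul_one_sub (a : R) (x y : A) :
    y * (x + a • 1) - (x + a • 1) * y = y * x - x * y := by
  rw [← neg_sub, add_smul_one_mul_sub, neg_sub]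

end Commutator

section Weyl

/-- Multiplication by the variable `X` as an operator on `R[X]`; over `ℂ` it is `lNeg`. -/
noncomputable def mulX (R : Type*) [CommRing R] : Module.End R R[X] :=
  LinearMap.mulLeft R X

/-- The Euler operator `X · d/dX` on `R[X]`, which measures degrees: the monomials
`X ^ n` are eigenvectors with eigenvalue `n`. -/
noncomputable def euler (R : Type*) [CommRing R] : Module.End R R[X] :=
  mulX R * derivative

variable {R : Type*} [CommRing R]

theorem mulX_apply (p : R[X]) : mulX R p = X * p := rfl

theorem euler_apply (p : R[X]) : euler R p = X * derivative p := rfl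

theorem derivative_mul_mulX_sub : derivative * mulX R - mulX R * derivative = 1 :=
  LinearMap.ext fun p => by
    simp [mulX_apply]

theorem derivative_mul_euler_sub : derivative * euler R - euler R * derivative = derivative := by
  rw [euler, ← mul_assoc, ← sub_mul, derivative_mul_mulX_sub, one_mul]

theorem euler_mul_mulX_sub : euler R * mulX R - mulX R * euler R = mulX R := by
  rw [euler, mul_assoc, ← mul_sub, derivative_mul_mulX_sub, mul_one]

theorem euler_X_pow (n : ℕ) : euler R (X ^ n) = (n : R) • X ^ n := by
  rw [euler_apply, derivative_X_pow, smul_eq_C_mul]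
  cases n with
  | zero => simp
  | succ n => rw [Nat.add_sub_cancel, mul_left_comm, ← pow_succ']

variable [IsAddTorsionFree R]

theorem eq_zero_of_commute_mulX {C : Module.End R R[X]} (hX : Commute C (mulX R))
    (hE : C * euler R - euler R * C = C) : C = 0 := by
  have hC_one : C 1 = 0 := by
    apply eq_zero_of_derivative_X_mul_eq_zero
    have h := LinearMap.congr_fun hE 1
    simp only [LinearMap.sub_apply, Module.End.mul_apply, euler_apply, derivative_one, mul_zero,
      map_zero, zero_sub] at h
    rw [derivative_mul, derivative_X, one_mul, add_eq_zero_iff_eq_neg, h]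
  refine linearMap_ext_X_pow fun n => ?_
  induction n with
  | zero => rwa [pow_zero]
  | succ n ih =>
    have h : C (X * X ^ n) = X * C (X ^ n) := LinearMap.congr_fun hX (X ^ n)
    rw [pow_succ', h, ih, LinearMap.zero_apply, mul_zero, LinearMap.zero_apply]

theorem eq_zero_of_commute_derivative {C : Module.End R R[X]} (hD : Commute derivative C)
    (hE : euler R * C - C * euler R = C) : C = 0 := by
  have hC_X_pow (n : ℕ) : (n + 1) • C (X ^ n) = X * C (derivative (X ^ n)) := by
    have hcomm : derivative (C (X ^ n)) = C (derivative (X ^ n)) := LinearMap.congr_fun hD (X ^ n)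
    have h := LinearMap.congr_fun hE (X ^ n)
    rw [LinearMap.sub_apply, Module.End.mul_apply, Module.End.mul_apply, euler_X_pow, map_smul,
      euler_apply, hcomm, Nat.cast_smul_eq_nsmul] at h
    rw [sub_eq_iff_eq_add.mp h, succ_nsmul']
  refine linearMap_ext_X_pow fun n => (smul_eq_zero_iff_right n.succ_ne_zero).mp ?_
  rw [hC_X_pow]
  induction n with
  | zero => rw [pow_zero, derivative_one, map_zero, mul_zero]
  | succ n ih =>
    have hn : C (X ^ n) = 0 :=
      (smul_eq_zero_iff_right n.succ_ne_zero).mp ((hC_X_pow n).trans ih)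
    rw [derivative_X_pow, ← smul_eq_C_mul, map_smul, Nat.add_sub_cancel, hn, smul_zero, mul_zero]

theorem eq_derivative_of_commutator_eq {D' : Module.End R R[X]}
    (hX : D' * mulX R - mulX R * D' = 1) (hE : D' * euler R - euler R * D' = D') :
    D' = derivative := by
  refine sub_eq_zero.mp (eq_zero_of_commute_mulX ?_ ?_)
  · rw [commute_iff_eq, ← sub_eq_zero, sub_mul, mul_sub, sub_sub_sub_comm, hX,
      derivative_mul_mulX_sub, sub_self]
  · rw [sub_mul, mul_sub, sub_sub_sub_comm, hE, derivative_mul_euler_sub]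

theorem eq_mulX_of_commutator_eq {G : Module.End R R[X]}
    (hD : derivative * G - G * derivative = 1) (hE : euler R * G - G * euler R = G) :
    G = mulX R := by
  refine sub_eq_zero.mp (eq_zero_of_commute_derivative ?_ ?_)
  · rw [commute_iff_eq, ← sub_eq_zero, sub_mul, mul_sub, sub_sub_sub_comm, hD,
      derivative_mul_mulX_sub, sub_self]
  · rw [sub_mul, mul_sub, sub_sub_sub_comm, hE, euler_mul_mulX_sub]

end Weyl

section Verma

variable {R : Type*} [CommRing R]

/-- The generator `l₀ = X · d/dX + h` of the Verma module of extremal weight `h`, over an arbitrary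
commutative ring; for `h` real it is `lZero h`. -/
noncomputable def vermaZero (h : R) : Module.End R R[X] :=
  euler R + h • 1

/-- The generator `l₁ = X · d²/dX² + 2h · d/dX` of the Verma module of extremal weight `h`, over an
arbitrary commutative ring; for `h` real it is `lOne h`. -/
noncomputable def vermaOne (h : R) : Module.End R R[X] :=
  mulX R * derivative * derivative + (2 * h) • derivative

theorem vermaOne_eq_mul_derivative (h : R) :
    vermaOne h = (euler R + (2 * h) • 1) * derivative := by
  rw [vermaOne, euler, add_mul, smul_one_mul]

variable [IsAddTorsionFree R]

theorem mul_euler_add_eq_mulX {h : R} {F : Module.End R R[X]}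
    (hOne : vermaOne h * F - F * vermaOne h = 1) (hZero : vermaZero h * F - F * vermaZero h = F) :
    F * (euler R + (2 * h) • 1) = mulX R := by
  have hE : euler R * F - F * euler R = F := by rwa [vermaZero, add_smul_one_mul_sub] at hZero
  apply eq_mulX_of_commutator_eq
  · rw [mul_mul_eq_of_commutator_eq (by rw [mul_add_smul_one_sub, derivative_mul_euler_sub])
      (by rwa [add_smul_one_mul_sub]), mul_assoc F, ← vermaOne_eq_mul_derivative, hOne]
  · rw [← add_smul_one_mul_sub (2 * h), ← mul_assoc, ← sub_mul, add_smul_one_mul_sub, hE]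

theorem add_two_mul_smul_apply_X_pow {h : R} {F : Module.End R R[X]}
    (hOne : vermaOne h * F - F * vermaOne h = 1) (hZero : vermaZero h * F - F * vermaZero h = F)
    (n : ℕ) : ((n : R) + 2 * h) • F (X ^ n) = X ^ (n + 1) := by
  calc
    ((n : R) + 2 * h) • F (X ^ n) = (F * (euler R + (2 * h) • 1)) (X ^ n) := by
      simp only [Module.End.mul_apply, LinearMap.add_apply, LinearMap.smul_apply,
        Module.End.one_apply, euler_X_pow, ← add_smul, map_smul]
    _ = X ^ (n + 1) := by rw [mul_euler_add_eq_mulX hOne hZero, mulX_apply, pow_succ']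

theorem stmt2_general (h : R) :
    (∀ D' : Module.End R R[X],
      (D' * mulX R - mulX R * D' = 1 ∧
       D' * vermaZero h - vermaZero h * D' = D') → D' = derivative) ∧
    (∀ F F' : Module.End R R[X],
      (∀ n : ℕ, ((n : R) + 2 * h) • F (X ^ n) = X ^ (n + 1)) →
      (vermaOne h * F' - F' * vermaOne h = 1 ∧
       vermaZero h * F' - F' * vermaZero h = F') → F' = F) := by
  refine ⟨fun D' ⟨hX, hZero⟩ => ?_, fun F F' hF ⟨hOne, hZero⟩ => linearMap_ext_X_pow fun n => ?_⟩
  · rw [vermaZero, mul_add_smul_one_sub] at hZero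
    exact eq_derivative_of_commutator_eq hX hZero
  · apply (isUnit_of_smul_eq_X_pow (hF n)).smul_left_cancel.mp
    rw [add_two_mul_smul_apply_X_pow hOne hZero n, hF n]

end Verma

theorem lOne_eq_vermaOne (h : ℝ) : lOne h = vermaOne (h : ℂ) := by
  rw [vermaOne, ← Complex.ofReal_ofNat, ← Complex.ofReal_mul]
  rfl

theorem natCast_add_two_mul_ofReal_ne_zero {h : ℝ} {n : ℕ} (hn : 2 * h ≠ -(n : ℝ)) :
    (n : ℂ) + 2 * h ≠ 0 := by
  rw [ne_eq, add_eq_zero_iff_eq_neg', ← Complex.ofReal_natCast]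
  exact_mod_cast hn

/-- uniqueness of the operators `D` and `F` of Proposition 1. -/
theorem stmt2 (h : ℝ) :
    (∀ D' : Module.End ℂ (Polynomial ℂ),
      (D' * lNeg - lNeg * D' = 1 ∧
       D' * lZero h - lZero h * D' = D' ∧
       D' * lOne h - lOne h * D' = D' * D') → D' = Dop) ∧
    ((∀ n : ℕ, 2 * h ≠ -(n : ℝ)) →
      ∀ F F' : Module.End ℂ (Polynomial ℂ),
      (∀ n : ℕ, F (Polynomial.X ^ n) = ((n : ℂ) + 2 * h)⁻¹ • Polynomial.X ^ (n + 1)) →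
      (lOne h * F' - F' * lOne h = 1 ∧
       lZero h * F' - F' * lZero h = F' ∧
       lNeg * F' - F' * lNeg = F' * F') → F' = F) := by
  refine ⟨fun D' ⟨hNeg, hZero, _⟩ => (stmt2_general (h : ℂ)).1 D' ⟨hNeg, hZero⟩,
    fun hh F F' hF ⟨hOne, hZero, _⟩ => (stmt2_general (h : ℂ)).2 F F' (fun n => ?_)
      ⟨lOne_eq_vermaOne h ▸ hOne, hZero⟩⟩
  rw [hF, smul_inv_smul₀ (natCast_add_two_mul_ofReal_ne_zero (hh n))]
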